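/- For all integers i ≥ 1, j ≥ 1, all positive integers k not divisible by 2 or 3, and all n ≥ 0, the number of overpartition (3^i·2^j·k)-tuples with odd parts satisfies OPT̄_{3^i·2^j·k}(3n+2) ≡ 0 (mod 3^{i+1}·2^{j+2}). -/

import Mathlib

/-- The number of overpartitions of `n` into odd parts: a partition of `n` into odd
parts together with a choice of which distinct part values are overlined. -/
def overpartitionOddCount (n : ℕ) : ℕ :=
  ∑ p ∈ Nat.Partition.odds n, 2 ^ p.parts.toFinset.card

/-- The number of overpartition `k`-tuples of `n` with odd parts. -/
def overpartitionOddTuples (k n : ℕ) : ℕ :=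
  ∑ c ∈ Finset.Nat.antidiagonalTuple k n, ∏ i, overpartitionOddCount (c i)

/-!
Let `F` be the generating series of overpartitions into odd parts, let `S` be the sum of
`σ(n) X ^ n` over odd `n`, and let `θ = X d/dX`. Taking the logarithmic derivative of the product
`F = ∏ (1 + X ^ m) / (1 - X ^ m)` over odd `m` gives `θ F = 2 F S`. Hence the coefficients
`c n` of `F ^ k` satisfy `n * c n = 2 k * [X ^ n] (F ^ k * S)`.

* Let `3 ^ i ∣ k`, `1 ≤ i`. The identity shows `3 ∣ c a` whenever `3 ∤ a`, and pairing each divisor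
  `d` of `b` with `b / d` shows `3 ∣ σ(b)` whenever `b ≡ 2 [MOD 3]`. If `n ≡ 2 [MOD 3]`, then in
  each product `c a * [X ^ b] S` with `a + b = n` one factor is divisible by `3`, which gains one
  power of `3` over `k`.
* Let `2 ^ j ∣ k`. Since `F ≡ 1` modulo `2`, the coefficient of `F ^ k * S` at an odd `n` is
  congruent to `σ(n)`, which is even unless `n` is a square. This gains a factor `2` over `2 k`.
* For even `n` dividing by `n` would lose powers of `2`. Instead, `S` is odd, so `F(X) F(-X)` has
  zero logarithmic derivative and equals `1`. As `2 ^ (j + 1)` divides `F(X) ^ k - 1` and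
  `F(-X) ^ k - 1`, its square divides their product `2 - F(X) ^ k - F(-X) ^ k`, whose coefficient
  at `n` is `-2 c n`. Hence `2 ^ (2 j + 1)` divides `c n`.
-/

open PowerSeries
open scoped ArithmeticFunction.sigma PowerSeries.WithPiTopology

section Derivation

variable {R A ι : Type*} [CommSemiring R] [CommSemiring A] [Algebra R A] {D : Derivation R A A}

lemma derivation_prod_eq_mul_sum {f u : ι → A} {s : Finset ι}
    (h : ∀ i ∈ s, D (f i) = f i * u i) : D (∏ i ∈ s, f i) = (∏ i ∈ s, f i) * ∑ i ∈ s, u i := by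
  classical
  induction s using Finset.induction_on with
  | empty => simp
  | insert a s ha ih =>
    rw [Finset.forall_mem_insert] at h
    rw [Finset.prod_insert ha, Finset.sum_insert ha, Derivation.leibniz, ih h.2, h.1,
      smul_eq_mul, smul_eq_mul]
    ring

lemma derivation_pow_eq_mul {a u : A} (h : D a = a * u) (k : ℕ) :
    D (a ^ k) = a ^ k * (k * u) := by
  simpa using derivation_prod_eq_mul_sum (s := Finset.range k) fun _ _ ↦ h

lemma derivation_eq_mul_of_hasProd [TopologicalSpace A] [ContinuousMul A] [T2Space A]
    (hD : Continuous D) {f u : ι → A} {a v : A} (h : ∀ i, D (f i) = f i * u i)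
    (hf : HasProd f a) (hu : HasSum u v) : D a = a * v := by
  refine tendsto_nhds_unique ((hD.tendsto a).comp hf) ((Filter.Tendsto.mul hf hu).congr fun s ↦ ?_)
  exact (derivation_prod_eq_mul_sum fun i _ ↦ h i).symm

end Derivation

section EulerDerivation

/-- The Euler operator `X * d/dX` on power series, which multiplies the `n`-th coefficient
by `n`. -/
noncomputable def eulerDerivation (R : Type*) [CommSemiring R] : Derivation R R⟦X⟧ R⟦X⟧ :=
  (X : R⟦X⟧) • derivative R

variable {R : Type*}

lemma coeff_eulerDerivation [CommSemiring R] (f : R⟦X⟧) (n : ℕ) :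
    coeff n (eulerDerivation R f) = n * coeff n f := by
  cases n with
  | zero => simp [eulerDerivation]
  | succ n =>
    rw [eulerDerivation, Derivation.smul_apply, smul_eq_mul, coeff_succ_X_mul, coeff_derivative]
    push_cast
    ring

lemma continuous_eulerDerivation [CommSemiring R] [TopologicalSpace R] [ContinuousMul R] :
    Continuous (eulerDerivation R) := by
  refine continuous_iff_continuousAt.2 fun f ↦ ?_
  rw [ContinuousAt, WithPiTopology.tendsto_iff_coeff_tendsto]
  intro n
  simp only [coeff_eulerDerivation]
  exact ((WithPiTopology.continuous_coeff R n).tendsto f).const_mul _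

lemma eulerDerivation_X_pow [CommSemiring R] (m : ℕ) :
    eulerDerivation R (X ^ m) = (m : R⟦X⟧) * X ^ m := by
  have h := derivation_pow_eq_mul (D := eulerDerivation R) (a := X) (u := 1)
    (by simp [eulerDerivation]) m
  rw [h, mul_one, mul_comm]

lemma coeff_evalNegHom [CommRing R] (f : R⟦X⟧) (n : ℕ) :
    coeff n (evalNegHom f) = (-1) ^ n * coeff n f :=
  coeff_rescale f _ n

lemma eulerDerivation_evalNegHom [CommRing R] (f : R⟦X⟧) :
    eulerDerivation R (evalNegHom f) = evalNegHom (eulerDerivation R f) := by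
  ext n
  simp only [coeff_eulerDerivation, coeff_evalNegHom]
  ring

lemma eq_C_of_eulerDerivation_eq_zero [CommSemiring R] [IsAddTorsionFree R] {f : R⟦X⟧}
    (h : eulerDerivation R f = 0) : f = C (constantCoeff f) := by
  ext n
  rcases eq_or_ne n 0 with rfl | hn
  · simp
  · have hcoeff := congrArg (coeff n) h
    rw [coeff_eulerDerivation, map_zero, ← nsmul_eq_mul] at hcoeff
    rw [coeff_C, if_neg hn, (smul_eq_zero_iff_right hn).1 hcoeff]

lemma mul_evalNegHom_eq_C_of_eulerDerivation_eq_mul [CommRing R] [IsAddTorsionFree R]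
    {f u : R⟦X⟧} (hf : eulerDerivation R f = f * u) (hu : evalNegHom u = -u) :
    f * evalNegHom f = C (constantCoeff f ^ 2) := by
  have hzero : eulerDerivation R (f * evalNegHom f) = 0 := by
    rw [Derivation.leibniz, eulerDerivation_evalNegHom, hf, map_mul, hu, smul_eq_mul, smul_eq_mul]
    ring
  rw [eq_C_of_eulerDerivation_eq_zero hzero, map_mul, sq, ← coeff_zero_eq_constantCoeff_apply,
    ← coeff_zero_eq_constantCoeff_apply, coeff_evalNegHom, pow_zero, one_mul]

end EulerDerivation

lemma coeff_pow_eq_sum_antidiagonalTuple {R : Type*} [CommSemiring R] (f : R⟦X⟧) (k n : ℕ) :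
    coeff n (f ^ k) = ∑ c ∈ Finset.Nat.antidiagonalTuple k n, ∏ i, coeff (c i) f := by
  have hpow : f ^ k = ∏ _i : Fin k, f := by simp
  rw [hpow, coeff_prod]
  refine Finset.sum_equiv Finsupp.equivFunOnFinite (fun c ↦ ?_) fun c _ ↦ rfl
  simp [Finset.Nat.mem_antidiagonalTuple]

section CoeffDvd

variable {R : Type*} [CommRing R]

lemma dvd_coeff_of_C_dvd {c : R} {f : R⟦X⟧} (h : C c ∣ f) (n : ℕ) : c ∣ coeff n f := by
  obtain ⟨g, rfl⟩ := h
  exact ⟨coeff n g, coeff_C_mul n g c⟩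

lemma C_dvd_of_dvd_coeff {c : R} {f : R⟦X⟧} (h : ∀ n, c ∣ coeff n f) : C c ∣ f := by
  choose g hg using h
  exact ⟨mk g, ext fun n ↦ by rw [coeff_C_mul, coeff_mk, hg]⟩

lemma sq_dvd_two_mul_coeff_of_mul_evalNegHom_eq_one {c : R} {f : R⟦X⟧}
    (hf : f * evalNegHom f = 1) (hc : C c ∣ f - 1) {n : ℕ} (hn : Even n) (hn0 : n ≠ 0) :
    c ^ 2 ∣ 2 * coeff n f := by
  have hc' : C c ∣ evalNegHom f - 1 := by
    obtain ⟨g, hg⟩ := hc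
    have hCc : evalNegHom (C c) = C c := by
      ext n
      rcases eq_or_ne n 0 with rfl | hn <;> simp [coeff_evalNegHom, coeff_C, *]
    exact ⟨evalNegHom g, by rw [← map_one evalNegHom, ← map_sub, hg, map_mul, hCc]⟩
  have hprod : C (c ^ 2) ∣ (f - 1) * (evalNegHom f - 1) := by
    rw [sq, map_mul]
    exact mul_dvd_mul hc hc'
  have hexpand : (f - 1) * (evalNegHom f - 1) = C 2 - (f + evalNegHom f) := by
    rw [map_ofNat]
    linear_combination hf
  have hdvd := dvd_coeff_of_C_dvd (hexpand ▸ hprod) n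
  rwa [map_sub, map_add, coeff_C, if_neg hn0, coeff_evalNegHom, hn.neg_one_pow, one_mul, zero_sub,
    dvd_neg, ← two_mul] at hdvd

end CoeffDvd

lemma pow_succ_dvd_pow_sub_one {A : Type*} [CommRing A] {a : A} {p j k : ℕ}
    (ha : (p : A) ∣ a - 1) (hk : p ^ j ∣ k) : (p : A) ^ (j + 1) ∣ a ^ k - 1 := by
  obtain ⟨m, rfl⟩ := hk
  have hpow := dvd_sub_pow_of_dvd_sub ha j
  rw [one_pow] at hpow
  exact hpow.trans (pow_one_sub_dvd_pow_mul_sub_one a (p ^ j) m)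

section Sigma

lemma dvd_sigma_one_of_forall_dvd_add {m n : ℕ} (hn : ¬ IsSquare n)
    (h : ∀ d e, d * e = n → m ∣ d + e) : m ∣ σ 1 n := by
  rw [ArithmeticFunction.sigma_one_apply, ← ZMod.natCast_eq_zero_iff, Nat.cast_sum]
  have hn0 : n ≠ 0 := by rintro rfl; exact hn .zero
  refine Finset.sum_involution (fun d _ ↦ n / d) (fun d hd ↦ ?_) (fun d hd _ hfix ↦ ?_)
    (fun d hd ↦ ?_) fun d hd ↦ ?_
  · rw [← Nat.cast_add, ZMod.natCast_eq_zero_iff]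
    exact h d _ (Nat.mul_div_cancel' (Nat.dvd_of_mem_divisors hd))
  · have hmul := Nat.mul_div_cancel' (Nat.dvd_of_mem_divisors hd)
    rw [hfix] at hmul
    exact hn ⟨d, hmul.symm⟩
  · exact Nat.mem_divisors.2 ⟨Nat.div_dvd_of_dvd (Nat.dvd_of_mem_divisors hd), hn0⟩
  · exact Nat.div_div_self (Nat.dvd_of_mem_divisors hd) hn0

lemma two_dvd_sigma_one {n : ℕ} (hn : Odd n) (hsq : ¬ IsSquare n) : 2 ∣ σ 1 n := by
  refine dvd_sigma_one_of_forall_dvd_add hsq fun d e hde ↦ ?_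
  rw [← hde, Nat.odd_mul] at hn
  exact (hn.1.add_odd hn.2).two_dvd

lemma not_isSquare_of_mod_three {n : ℕ} (hn : n % 3 = 2) : ¬ IsSquare n := by
  rintro ⟨d, rfl⟩
  rcases (by omega : d % 3 = 0 ∨ d % 3 = 1 ∨ d % 3 = 2) with h | h | h <;>
    simp [Nat.mul_mod, h] at hn

lemma three_dvd_sigma_one {n : ℕ} (hn : n % 3 = 2) : 3 ∣ σ 1 n := by
  refine dvd_sigma_one_of_forall_dvd_add (not_isSquare_of_mod_three hn) fun d e hde ↦ ?_
  have hmod : d % 3 * (e % 3) % 3 = 2 := by rw [← Nat.mul_mod, hde, hn]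
  have hd : d % 3 < 3 := Nat.mod_lt d (by norm_num)
  have he : e % 3 < 3 := Nat.mod_lt e (by norm_num)
  rw [Nat.dvd_iff_mod_eq_zero, Nat.add_mod]
  interval_cases d % 3 <;> interval_cases e % 3 <;> simp_all

end Sigma

section GeneratingSeries

/-- The generating series of overpartitions into odd parts. -/
def overpartitionOddSeries : ℤ⟦X⟧ :=
  mk fun n ↦ (overpartitionOddCount n : ℤ)

/-- The Euler factor of `overpartitionOddSeries` at the part `m`: the parts equal to `m` either are
absent or, when `m` is odd, occur some `j + 1` times with or without an overline. -/
noncomputable def oddPartFactor (m : ℕ) : ℤ⟦X⟧ :=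
  1 + ∑' j, (if Odd m then 2 else 0 : ℤ) • X ^ (m * (j + 1))

/-- The contribution of the part `m` to `oddSigmaSeries`, which is half of the logarithmic
derivative of `oddPartFactor m` with respect to `eulerDerivation`. It vanishes for even `m`. -/
def oddMultipleSeries (m : ℕ) : ℤ⟦X⟧ :=
  mk fun n ↦ if m ∣ n ∧ Odd n then (m : ℤ) else 0

/-- The series `∑ σ(n) X ^ n` over odd `n`. -/
def oddSigmaSeries : ℤ⟦X⟧ :=
  mk fun n ↦ if Odd n then (σ 1 n : ℤ) else 0

lemma coeff_overpartitionOddSeries_pow (k n : ℕ) :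
    coeff n (overpartitionOddSeries ^ k) = overpartitionOddTuples k n := by
  simp [coeff_pow_eq_sum_antidiagonalTuple, overpartitionOddSeries, overpartitionOddTuples]

lemma overpartitionOddCount_zero : overpartitionOddCount 0 = 1 := by
  decide

lemma two_dvd_overpartitionOddCount {n : ℕ} (hn : n ≠ 0) : 2 ∣ overpartitionOddCount n := by
  refine Finset.dvd_sum fun p _ ↦ dvd_pow_self 2 ?_
  rw [Finset.card_ne_zero, Multiset.toFinset_nonempty]
  intro hp
  exact hn (by rw [← p.parts_sum, hp, Multiset.sum_zero])

lemma C_two_dvd_overpartitionOddSeries_sub_one : C 2 ∣ overpartitionOddSeries - 1 := by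
  refine C_dvd_of_dvd_coeff fun n ↦ ?_
  rw [map_sub, overpartitionOddSeries, coeff_mk, coeff_one]
  split_ifs with hn
  · simp [hn, overpartitionOddCount_zero]
  · simpa using Int.natCast_dvd_natCast.2 (two_dvd_overpartitionOddCount hn)

lemma genFun_eq_overpartitionOddSeries :
    Nat.Partition.genFun (fun m _ ↦ if Odd m then (2 : ℤ) else 0) = overpartitionOddSeries := by
  ext n
  rw [Nat.Partition.coeff_genFun, overpartitionOddSeries, coeff_mk, overpartitionOddCount,
    Nat.Partition.odds, Nat.Partition.restricted, Finset.sum_filter]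
  push_cast
  refine Finset.sum_congr rfl fun p _ ↦ ?_
  simp [Finsupp.prod, Finset.prod_ite_zero]

lemma hasProd_oddPartFactor :
    HasProd (fun i ↦ oddPartFactor (i + 1)) overpartitionOddSeries := by
  rw [← genFun_eq_overpartitionOddSeries]
  unfold oddPartFactor
  exact Nat.Partition.hasProd_genFun fun m _ ↦ if Odd m then (2 : ℤ) else 0

lemma one_sub_X_pow_mul_oddPartFactor {m : ℕ} (hm : Odd m) :
    (1 - X ^ m) * oddPartFactor m = 1 + X ^ m := by
  have hconst : constantCoeff (X ^ m : ℤ⟦X⟧) = 0 := by simp [hm.pos.ne']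
  have hgeom := WithPiTopology.one_sub_mul_tsum_pow_of_constantCoeff_eq_zero hconst
  have hfactor : oddPartFactor m = 1 + 2 * X ^ m * ∑' j, (X ^ m) ^ j := by
    rw [oddPartFactor, if_pos hm, ← Summable.tsum_mul_left]
    · congr! 3 with j
      rw [zsmul_eq_mul]
      push_cast
      ring
    · exact WithPiTopology.summable_pow_of_constantCoeff_eq_zero hconst
  rw [hfactor]
  linear_combination 2 * X ^ m * hgeom

lemma one_sub_X_pow_mul_oddMultipleSeries {m : ℕ} (hm : Odd m) :
    (1 - X ^ (2 * m)) * oddMultipleSeries m = (m : ℤ⟦X⟧) * X ^ m := by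
  have hm0 := hm.pos
  ext n
  rw [sub_mul, one_mul, map_sub, coeff_X_pow_mul', ← nsmul_eq_mul, map_nsmul, coeff_X_pow]
  simp only [oddMultipleSeries, coeff_mk]
  rcases le_or_gt (2 * m) n with hle | hlt
  · obtain ⟨r, rfl⟩ := Nat.exists_eq_add_of_le' hle
    have hne : r + 2 * m ≠ m := by omega
    simp [hne, Nat.odd_add, Nat.dvd_add_left]
  · have hiff : m ∣ n ∧ Odd n ↔ n = m := by
      refine ⟨?_, fun h ↦ h.symm ▸ ⟨dvd_rfl, hm⟩⟩
      rintro ⟨⟨c, rfl⟩, hodd⟩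
      have hc : c < 2 := by nlinarith
      interval_cases c <;> simp_all
    simp [hiff, hlt.not_ge]

lemma eulerDerivation_oddPartFactor (m : ℕ) :
    eulerDerivation ℤ (oddPartFactor m) = oddPartFactor m * (2 * oddMultipleSeries m) := by
  rcases m.even_or_odd with hm | hm
  · have hfactor : oddPartFactor m = 1 := by simp [oddPartFactor, Nat.not_odd_iff_even.2 hm]
    have hzero : oddMultipleSeries m = 0 := by
      ext n
      have hndvd : ¬ (m ∣ n ∧ Odd n) := fun h ↦ Nat.not_even_iff_odd.2 h.2 (hm.trans_dvd h.1)
      simp [oddMultipleSeries, hndvd]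
    simp [hfactor, hzero]
  · have hE := one_sub_X_pow_mul_oddPartFactor hm
    have hS := one_sub_X_pow_mul_oddMultipleSeries hm
    have hdE := congrArg (eulerDerivation ℤ) hE
    simp only [Derivation.leibniz, map_sub, map_add, Derivation.map_one_eq_zero,
      eulerDerivation_X_pow, smul_eq_mul] at hdE
    have hne : (1 - X ^ (2 * m) : ℤ⟦X⟧) ≠ 0 := by
      intro h
      simpa [hm.pos.ne'] using congrArg constantCoeff h
    -- The denominators cancel because `1 - X ^ (2 * m) = (1 - X ^ m) * (1 + X ^ m)`.
    refine mul_left_cancel₀ hne ?_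
    linear_combination (1 + X ^ m) * hdE - 2 * oddPartFactor m * hS - m * X ^ m * hE

lemma hasSum_oddMultipleSeries :
    HasSum (fun i ↦ oddMultipleSeries (i + 1)) oddSigmaSeries := by
  rw [WithPiTopology.hasSum_iff_hasSum_coeff]
  intro n
  have hcoeff : coeff n oddSigmaSeries =
      ∑ i ∈ Finset.range n, coeff n (oddMultipleSeries (i + 1)) := by
    simp only [oddSigmaSeries, oddMultipleSeries, coeff_mk]
    split_ifs with hn
    · simp only [hn, and_true]
      rw [ArithmeticFunction.sigma_one_apply, Nat.divisors, Finset.sum_filter,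
        Finset.sum_Ico_eq_sum_range]
      simp [add_comm 1]
    · simp [hn]
  rw [hcoeff]
  refine hasSum_sum_of_ne_finset_zero fun i hi ↦ ?_
  have hndvd : ¬ (i + 1 ∣ n ∧ Odd n) := fun ⟨hdvd, hodd⟩ ↦
    hi (Finset.mem_range.2 (Nat.le_of_dvd hodd.pos hdvd))
  rw [oddMultipleSeries, coeff_mk, if_neg hndvd]

theorem eulerDerivation_overpartitionOddSeries :
    eulerDerivation ℤ overpartitionOddSeries = overpartitionOddSeries * (2 * oddSigmaSeries) :=
  derivation_eq_mul_of_hasProd continuous_eulerDerivation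
    (fun i ↦ eulerDerivation_oddPartFactor (i + 1)) hasProd_oddPartFactor
    (hasSum_oddMultipleSeries.mul_left 2)

lemma natCast_mul_overpartitionOddTuples (k n : ℕ) :
    (n * overpartitionOddTuples k n : ℤ) =
      2 * k * coeff n (overpartitionOddSeries ^ k * oddSigmaSeries) := by
  have h := congrArg (coeff n) (derivation_pow_eq_mul eulerDerivation_overpartitionOddSeries k)
  have hC : overpartitionOddSeries ^ k * (k * (2 * oddSigmaSeries)) =
      C (2 * k : ℤ) * (overpartitionOddSeries ^ k * oddSigmaSeries) := by
    rw [map_mul, map_ofNat, map_natCast]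
    ring
  rwa [coeff_eulerDerivation, coeff_overpartitionOddSeries_pow, hC, coeff_C_mul] at h

lemma overpartitionOddSeries_mul_evalNegHom :
    overpartitionOddSeries * evalNegHom overpartitionOddSeries = 1 := by
  have hodd : evalNegHom (2 * oddSigmaSeries) = -(2 * oddSigmaSeries) := by
    rw [map_mul, map_ofNat, ← mul_neg]
    congr 1
    ext n
    rw [coeff_evalNegHom, map_neg, oddSigmaSeries, coeff_mk]
    split_ifs with hn
    · rw [hn.neg_one_pow, neg_one_mul]
    · simp
  rw [mul_evalNegHom_eq_C_of_eulerDerivation_eq_mul eulerDerivation_overpartitionOddSeries hodd]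
  simp [overpartitionOddSeries, ← coeff_zero_eq_constantCoeff_apply, overpartitionOddCount_zero]

end GeneratingSeries

section Congruences

lemma mul_dvd_overpartitionOddTuples {c d k n : ℕ} (hc : c ∣ 2 * k)
    (hd : (d : ℤ) ∣ coeff n (overpartitionOddSeries ^ k * oddSigmaSeries))
    (hn : (c * d).Coprime n) : c * d ∣ overpartitionOddTuples k n := by
  refine hn.dvd_of_dvd_mul_left (Int.natCast_dvd_natCast.1 ?_)
  push_cast
  rw [natCast_mul_overpartitionOddTuples]
  exact mul_dvd_mul (by exact_mod_cast hc) hd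

lemma dvd_overpartitionOddTuples {d k n : ℕ} (hk : d ∣ k) (hn : d.Coprime n) :
    d ∣ overpartitionOddTuples k n := by
  simpa using mul_dvd_overpartitionOddTuples (d := 1) (hk.mul_left 2) (by simp) (by simpa using hn)

lemma two_dvd_coeff_pow_mul_oddSigmaSeries {n : ℕ} (k : ℕ) (hn : Odd n) (hsq : ¬ IsSquare n) :
    2 ∣ coeff n (overpartitionOddSeries ^ k * oddSigmaSeries) := by
  have hsub : C 2 ∣ (overpartitionOddSeries ^ k - 1) * oddSigmaSeries :=
    (C_two_dvd_overpartitionOddSeries_sub_one.trans (sub_one_dvd_pow_sub_one _ k)).mul_right _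
  have hsigma : 2 ∣ coeff n oddSigmaSeries := by
    rw [oddSigmaSeries, coeff_mk, if_pos hn]
    exact_mod_cast two_dvd_sigma_one hn hsq
  rw [← dvd_sub_left hsigma, ← map_sub, ← sub_one_mul]
  exact dvd_coeff_of_C_dvd hsub n

lemma three_dvd_coeff_pow_mul_oddSigmaSeries {k n : ℕ} (hk : 3 ∣ k) (hn : n % 3 = 2) :
    3 ∣ coeff n (overpartitionOddSeries ^ k * oddSigmaSeries) := by
  rw [coeff_mul]
  refine Finset.dvd_sum fun ⟨a, b⟩ hab ↦ ?_
  have hadd : a + b = n := by simpa using hab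
  rw [coeff_overpartitionOddSeries_pow]
  by_cases ha : 3 ∣ a
  · refine Dvd.dvd.mul_left ?_ _
    rw [oddSigmaSeries, coeff_mk]
    split_ifs
    · exact_mod_cast three_dvd_sigma_one (by omega : b % 3 = 2)
    · exact dvd_zero 3
  · have hcop : Nat.Coprime 3 a := (Nat.Prime.coprime_iff_not_dvd Nat.prime_three).2 ha
    exact Dvd.dvd.mul_right (by exact_mod_cast dvd_overpartitionOddTuples hk hcop) _

theorem two_pow_dvd_overpartitionOddTuples_of_odd {j k n : ℕ} (hk : 2 ^ j ∣ k) (hn : Odd n)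
    (hsq : ¬ IsSquare n) : 2 ^ (j + 2) ∣ overpartitionOddTuples k n := by
  have hk' : 2 ^ (j + 1) ∣ 2 * k := by simpa [pow_succ'] using mul_dvd_mul_left 2 hk
  have hcop : (2 ^ (j + 1) * 2).Coprime n := by
    rw [← pow_succ]
    exact (Nat.coprime_two_left.2 hn).pow_left _
  exact mul_dvd_overpartitionOddTuples hk' (two_dvd_coeff_pow_mul_oddSigmaSeries k hn hsq) hcop

theorem two_pow_dvd_overpartitionOddTuples_of_even {j k n : ℕ} (hk : 2 ^ j ∣ k) (hn : Even n)
    (hn0 : n ≠ 0) : 2 ^ (2 * j + 1) ∣ overpartitionOddTuples k n := by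
  have hinv : overpartitionOddSeries ^ k * evalNegHom (overpartitionOddSeries ^ k) = 1 := by
    rw [map_pow, ← mul_pow, overpartitionOddSeries_mul_evalNegHom, one_pow]
  have hsub : C (2 ^ (j + 1)) ∣ overpartitionOddSeries ^ k - 1 := by
    rw [map_pow]
    exact pow_succ_dvd_pow_sub_one (p := 2) C_two_dvd_overpartitionOddSeries_sub_one hk
  have h := sq_dvd_two_mul_coeff_of_mul_evalNegHom_eq_one hinv hsub hn hn0
  rw [coeff_overpartitionOddSeries_pow] at h
  have hmul : 2 * 2 ^ (2 * j + 1) ∣ 2 * overpartitionOddTuples k n := by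
    rw [← pow_succ', show 2 * j + 1 + 1 = (j + 1) * 2 by ring, pow_mul]
    exact_mod_cast h
  exact Nat.dvd_of_mul_dvd_mul_left two_pos hmul

theorem two_pow_dvd_overpartitionOddTuples {j k n : ℕ} (hj : 1 ≤ j) (hk : 2 ^ j ∣ k)
    (hsq : ¬ IsSquare n) : 2 ^ (j + 2) ∣ overpartitionOddTuples k n := by
  rcases n.even_or_odd with hn | hn
  · have hn0 : n ≠ 0 := by rintro rfl; exact hsq .zero
    exact (pow_dvd_pow 2 (by omega)).trans
      (two_pow_dvd_overpartitionOddTuples_of_even hk hn hn0)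
  · exact two_pow_dvd_overpartitionOddTuples_of_odd hk hn hsq

theorem three_pow_dvd_overpartitionOddTuples {i k n : ℕ} (hi : 1 ≤ i) (hk : 3 ^ i ∣ k)
    (hn : n % 3 = 2) : 3 ^ (i + 1) ∣ overpartitionOddTuples k n := by
  have hk3 : 3 ∣ k := (dvd_pow_self 3 (by omega)).trans hk
  have hcop : (3 ^ i * 3).Coprime n := by
    rw [← pow_succ]
    exact ((Nat.Prime.coprime_iff_not_dvd Nat.prime_three).2 (by omega)).pow_left _
  exact mul_dvd_overpartitionOddTuples (hk.mul_left 2)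
    (three_dvd_coeff_pow_mul_oddSigmaSeries hk3 hn) hcop

end Congruences

theorem overpartitionOddTuples_three_n_two_general {i j k n : ℕ} (hi : 1 ≤ i) (hj : 1 ≤ j)
    (hk : 3 ^ i * 2 ^ j ∣ k) (hn : n % 3 = 2) :
    overpartitionOddTuples k n ≡ 0 [MOD 3 ^ (i + 1) * 2 ^ (j + 2)] := by
  have hcop : Nat.Coprime (3 ^ (i + 1)) (2 ^ (j + 2)) := Nat.Coprime.pow _ _ (by norm_num)
  exact Nat.modEq_zero_iff_dvd.2 <| hcop.mul_dvd_of_dvd_of_dvd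
    (three_pow_dvd_overpartitionOddTuples hi (dvd_of_mul_right_dvd hk) hn)
    (two_pow_dvd_overpartitionOddTuples hj (dvd_of_mul_left_dvd hk) (not_isSquare_of_mod_three hn))

theorem overpartitionOddTuples_three_n_two (i j k n : ℕ) (hi : 1 ≤ i) (hj : 1 ≤ j)
    (hk : 0 < k) (hk2 : ¬ (2 ∣ k)) (hk3 : ¬ (3 ∣ k)) :
    overpartitionOddTuples (3 ^ i * 2 ^ j * k) (3 * n + 2) ≡ 0 [MOD 3 ^ (i + 1) * 2 ^ (j + 2)] :=
  overpartitionOddTuples_three_n_two_general hi hj (dvd_mul_right _ k) (by omega)
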